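/- Let f_1, f_2 : ℝ² → ℝ be convex polynomial functions with f_1(0,0) = f_2(0,0) = 0, let A = {(x, y, z) ∈ ℝ³ : z ≥ f_1(x, y) and z ≥ f_2(x, y)}, and let C = {(x, y, z) ∈ ℝ³ : z = f_1(x, y) = f_2(x, y)}. Let φ : ℝ → ℝ³ be analytic at 0 with φ(s) = (α_1, α_2, 0)s + (β_1, β_2, β_3)s² + O(s³) as s → 0, where (α_1, α_2) ≠ (0,0), and φ(s) ∈ C for all s in a neighborhood of 0 and there is a neighborhood U of the origin in ℝ³ with C ∩ U contained in the image of φ. Let (a, b) ∈ ℝ², B = {t·(a, b, 0) : t ∈ ℝ}, and assume the three vectors (a, b, 0), (−∂f_1/∂x(0,0), −∂f_1/∂y(0,0), 1), (−∂f_2/∂x(0,0), −∂f_2/∂y(0,0), 1) are linearly independent. Suppose either (a, b, 0) ≠ c·(α_1, α_2, 0) for every c ≠ 0, or (a, b, 0) = c·(α_1, α_2, 0) for some c ≠ 0 and the unique solution (λ_1, λ_2, μ) of (β_1, β_2, β_3) = λ_1(−∂f_1/∂x(0,0), −∂f_1/∂y(0,0), 1) + λ_2(−∂f_2/∂x(0,0),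 −∂f_2/∂y(0,0), 1) + μ(a, b, 0) satisfies λ_1 λ_2 < 0. Then there exists ε > 0 such that P_A(p) ∉ C for every p ∈ B with 0 < ‖p‖ < ε. -/

import Mathlib

open Filter

/-- `u` is the metric projection of `p` onto `S`. -/
def IsMetricProj {E : Type*} [NormedAddCommGroup E] (S : Set E) (p u : E) : Prop :=
  u ∈ S ∧ ∀ s ∈ S, ‖u - p‖ ≤ ‖s - p‖

/-- The point (a, b, c) of Euclidean 3-space. -/
noncomputable def e3 (a b c : ℝ) : EuclideanSpace ℝ (Fin 3) :=
  (WithLp.equiv 2 (Fin 3 → ℝ)).symm ![a, b, c]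

open scoped Topology

lemma strict_eval (f : MvPolynomial (Fin 2) ℝ) (v : Fin 2 → ℝ) :
    HasStrictFDerivAt (fun v : Fin 2 → ℝ => MvPolynomial.eval v f)
      (∑ i, MvPolynomial.eval v (MvPolynomial.pderiv i f) •
        (ContinuousLinearMap.proj i : (Fin 2 → ℝ) →L[ℝ] ℝ)) v := by
  induction f using MvPolynomial.induction_on with
  | C r => simpa using hasStrictFDerivAt_const (𝕜 := ℝ) r v
  | add p q hp hq =>
    have := hp.fun_add hq
    simp only [map_add]
    refine this.congr_fderiv ?_
    ext w; simp; ring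
  | mul_X p i hp =>
    have h2 : HasStrictFDerivAt (fun v : Fin 2 → ℝ => v i)
        (ContinuousLinearMap.proj i : (Fin 2 → ℝ) →L[ℝ] ℝ) v :=
      (ContinuousLinearMap.proj i : (Fin 2 → ℝ) →L[ℝ] ℝ).hasStrictFDerivAt
    have := hp.fun_mul h2
    simp only [map_mul, MvPolynomial.eval_X]
    refine this.congr_fderiv ?_
    ext w
    fin_cases i <;> simp [MvPolynomial.pderiv_X, Pi.single_apply] <;> ring

lemma farkas3 (p1 q1 p2 q2 u1 u2 u3 : ℝ) (hne : p1 ≠ p2 ∨ q1 ≠ q2)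
    (H : ∀ x y z : ℝ, p1 * x + q1 * y < z → p2 * x + q2 * y < z →
      0 ≤ u1 * x + u2 * y + u3 * z) :
    ∃ l1 l2 : ℝ, 0 ≤ l1 ∧ 0 ≤ l2 ∧ u1 = -l1 * p1 - l2 * p2 ∧ u2 = -l1 * q1 - l2 * q2 ∧
      u3 = l1 + l2 := by
  have H' : ∀ x y z : ℝ, p1 * x + q1 * y ≤ z → p2 * x + q2 * y ≤ z →
      0 ≤ u1 * x + u2 * y + u3 * z := by
    intro x y z h1 h2
    have ht : Tendsto (fun e : ℝ => u1 * x + u2 * y + u3 * (z + e)) (𝓝[>] 0)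
        (𝓝 (u1 * x + u2 * y + u3 * (z + 0))) := by
      apply Tendsto.mono_left _ nhdsWithin_le_nhds
      apply Continuous.tendsto
      fun_prop
    rw [add_zero] at ht
    refine ge_of_tendsto ht ?_
    filter_upwards [self_mem_nhdsWithin] with e he
    have he' : 0 < e := he
    exact H _ _ _ (by linarith) (by linarith)
  obtain ⟨N1, hN1⟩ : ∃ N1, N1 = q2 - q1 := ⟨_, rfl⟩
  obtain ⟨N2, hN2⟩ : ∃ N2, N2 = p1 - p2 := ⟨_, rfl⟩
  obtain ⟨N3, hN3⟩ : ∃ N3, N3 = p1 * q2 - q1 * p2 := ⟨_, rfl⟩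
  obtain ⟨D, hD⟩ : ∃ D, D = N1 ^ 2 + N2 ^ 2 + N3 ^ 2 := ⟨_, rfl⟩
  have hN : 0 < D := by
    rw [hD]
    rcases hne with h | h
    · have : N2 ≠ 0 := by rw [hN2]; exact sub_ne_zero.mpr h
      positivity
    · have : N1 ≠ 0 := by rw [hN1]; exact sub_ne_zero.mpr h.symm
      positivity
  have hu : u1 * N1 + u2 * N2 + u3 * N3 = 0 := by
    have a1 := H' N1 N2 N3 (by subst_vars; linarith) (by subst_vars; linarith)
    have a2 := H' (-N1) (-N2) (-N3) (by subst_vars; linarith) (by subst_vars; linarith)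
    linarith
  obtain ⟨A, hA⟩ : ∃ A, A = p1 ^ 2 + q1 ^ 2 + 1 := ⟨_, rfl⟩
  obtain ⟨B, hB⟩ : ∃ B, B = p2 ^ 2 + q2 ^ 2 + 1 := ⟨_, rfl⟩
  obtain ⟨G, hG⟩ : ∃ G, G = p1 * p2 + q1 * q2 + 1 := ⟨_, rfl⟩
  have hDD : D = A * B - G ^ 2 := by subst_vars; ring
  have b1 := H' (-B * p1 + G * p2) (-B * q1 + G * q2) (B - G)
    (by
      have : (B - G) - (p1 * (-B * p1 + G * p2) + q1 * (-B * q1 + G * q2)) = D := by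
        rw [hDD, hA, hG]; ring
      linarith)
    (by
      have : (B - G) - (p2 * (-B * p1 + G * p2) + q2 * (-B * q1 + G * q2)) = 0 := by
        rw [hB, hG]; ring
      linarith)
  have b2 := H' (-A * p2 + G * p1) (-A * q2 + G * q1) (A - G)
    (by
      have : (A - G) - (p1 * (-A * p2 + G * p1) + q1 * (-A * q2 + G * q1)) = 0 := by
        rw [hA, hG]; ring
      linarith)
    (by
      have : (A - G) - (p2 * (-A * p2 + G * p1) + q2 * (-A * q2 + G * q1)) = D := by
        rw [hDD, hB, hG]; ring
      linarith)
  refine ⟨_ / D, _ / D, div_nonneg b1 hN.le, div_nonneg b2 hN.le, ?_, ?_, ?_⟩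
  · field_simp
    have := congrArg (· * N1) hu
    rw [hD]
    simp only [zero_mul] at this
    rw [← sub_eq_zero, ← this, hA, hB, hG, hN1, hN2, hN3]; ring
  · field_simp
    have := congrArg (· * N2) hu
    rw [hD]
    simp only [zero_mul] at this
    rw [← sub_eq_zero, ← this, hA, hB, hG, hN1, hN2, hN3]; ring
  · field_simp
    have := congrArg (· * N3) hu
    rw [hD]
    simp only [zero_mul] at this
    rw [← sub_eq_zero, ← this, hA, hB, hG, hN1, hN2, hN3]; ring

lemma curve_deriv (f : MvPolynomial (Fin 2) ℝ) (x y : ℝ → ℝ) (x' y' s : ℝ)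
    (hx : HasDerivAt x x' s) (hy : HasDerivAt y y' s) :
    HasDerivAt (fun s => MvPolynomial.eval ![x s, y s] f)
      (MvPolynomial.eval ![x s, y s] (MvPolynomial.pderiv 0 f) * x' +
        MvPolynomial.eval ![x s, y s] (MvPolynomial.pderiv 1 f) * y') s := by
  have hv : HasDerivAt (fun s => ![x s, y s]) ![x', y'] s := by
    rw [hasDerivAt_pi]
    intro i
    fin_cases i
    · simpa using hx
    · simpa using hy
  have := (strict_eval f ![x s, y s]).hasFDerivAt.comp_hasDerivAt s hv
  simp only [Function.comp_def] at this
  refine HasDerivAt.congr_deriv this ?_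
  simp

lemma line_lt (f : MvPolynomial (Fin 2) ℝ) (x0 y0 z0 x y z : ℝ)
    (h0 : z0 = MvPolynomial.eval ![x0, y0] f)
    (h : MvPolynomial.eval ![x0, y0] (MvPolynomial.pderiv 0 f) * x +
        MvPolynomial.eval ![x0, y0] (MvPolynomial.pderiv 1 f) * y < z) :
    ∀ᶠ e in 𝓝[>] (0 : ℝ), MvPolynomial.eval ![x0 + e * x, y0 + e * y] f ≤ z0 + e * z := by
  have hx : HasDerivAt (fun e : ℝ => x0 + e * x) x 0 := by
    simpa using ((hasDerivAt_id (0 : ℝ)).mul_const x).const_add x0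
  have hy : HasDerivAt (fun e : ℝ => y0 + e * y) y 0 := by
    simpa using ((hasDerivAt_id (0 : ℝ)).mul_const y).const_add y0
  have hc := curve_deriv f _ _ _ _ _ hx hy
  simp only [zero_mul, add_zero] at hc
  have hs := hc.tendsto_slope.eventually (eventually_lt_nhds h)
  have hs' := hs.filter_mono (nhdsWithin_mono (0 : ℝ) (t := {0}ᶜ) (s := Set.Ioi 0)
    (fun e he => ne_of_gt he))
  filter_upwards [hs', self_mem_nhdsWithin] with e he hpos
  have hpos' : 0 < e := hpos
  rw [slope_def_field, sub_zero, div_lt_iff₀ hpos'] at he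
  simp only [zero_mul, add_zero] at he
  rw [← h0] at he
  linarith

lemma kkt (f₁ f₂ : MvPolynomial (Fin 2) ℝ) (w p : EuclideanSpace ℝ (Fin 3))
    (hproj : ∀ q : EuclideanSpace ℝ (Fin 3), MvPolynomial.eval ![q 0, q 1] f₁ ≤ q 2 →
      MvPolynomial.eval ![q 0, q 1] f₂ ≤ q 2 → ‖w - p‖ ≤ ‖q - p‖)
    (hw1 : w 2 = MvPolynomial.eval ![w 0, w 1] f₁)
    (hw2 : w 2 = MvPolynomial.eval ![w 0, w 1] f₂)
    (hne : MvPolynomial.eval ![w 0, w 1] (MvPolynomial.pderiv 0 f₁) ≠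
        MvPolynomial.eval ![w 0, w 1] (MvPolynomial.pderiv 0 f₂) ∨
      MvPolynomial.eval ![w 0, w 1] (MvPolynomial.pderiv 1 f₁) ≠
        MvPolynomial.eval ![w 0, w 1] (MvPolynomial.pderiv 1 f₂)) :
    ∃ l1 l2 : ℝ, 0 ≤ l1 ∧ 0 ≤ l2 ∧
      w 0 - p 0 = -l1 * MvPolynomial.eval ![w 0, w 1] (MvPolynomial.pderiv 0 f₁) -
        l2 * MvPolynomial.eval ![w 0, w 1] (MvPolynomial.pderiv 0 f₂) ∧
      w 1 - p 1 = -l1 * MvPolynomial.eval ![w 0, w 1] (MvPolynomial.pderiv 1 f₁) -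
        l2 * MvPolynomial.eval ![w 0, w 1] (MvPolynomial.pderiv 1 f₂) ∧
      w 2 - p 2 = l1 + l2 := by
  apply farkas3 _ _ _ _ _ _ _ hne
  intro x y z h1 h2
  have e1 := line_lt f₁ _ _ _ x y z hw1 h1
  have e2 := line_lt f₂ _ _ _ x y z hw2 h2
  have ht : Tendsto (fun e : ℝ => 2 * ((w 0 - p 0) * x + (w 1 - p 1) * y + (w 2 - p 2) * z) +
      e * (x ^ 2 + y ^ 2 + z ^ 2)) (𝓝[>] 0)
      (𝓝 (2 * ((w 0 - p 0) * x + (w 1 - p 1) * y + (w 2 - p 2) * z) +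
      0 * (x ^ 2 + y ^ 2 + z ^ 2))) := by
    apply Tendsto.mono_left _ nhdsWithin_le_nhds
    apply Continuous.tendsto
    fun_prop
  have : 0 ≤ 2 * ((w 0 - p 0) * x + (w 1 - p 1) * y + (w 2 - p 2) * z) +
      0 * (x ^ 2 + y ^ 2 + z ^ 2) := by
    refine ge_of_tendsto ht ?_
    filter_upwards [e1, e2, self_mem_nhdsWithin] with e he1 he2 hpos
    have hpos' : 0 < e := hpos
    have h := hproj (e3 (w 0 + e * x) (w 1 + e * y) (w 2 + e * z))
      (by simpa [e3] using he1) (by simpa [e3] using he2)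
    rw [EuclideanSpace.norm_eq, EuclideanSpace.norm_eq] at h
    rw [Real.sqrt_le_sqrt_iff (by positivity)] at h
    simp [Fin.sum_univ_three, e3] at h
    have : 0 ≤ e * (2 * ((w 0 - p 0) * x + (w 1 - p 1) * y + (w 2 - p 2) * z) +
      e * (x ^ 2 + y ^ 2 + z ^ 2)) := by nlinarith
    exact nonneg_of_mul_nonneg_right this hpos'
  linarith

lemma small_is_zero (d K s : ℝ) (n : ℕ) (h : d * |s| ^ n ≤ K * |s| ^ (n + 1))
    (hs : K * |s| < d) : s = 0 := by
  by_contra h0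
  have : 0 < |s| ^ n := by positivity
  have : K * |s| * |s| ^ n < d * |s| ^ n := by gcongr
  rw [pow_succ] at h
  linarith

lemma event_small (d K : ℝ) (hd : 0 < d) : ∀ᶠ s in 𝓝 (0 : ℝ), K * |s| < d := by
  have : Tendsto (fun s : ℝ => K * |s|) (𝓝 0) (𝓝 (K * |0|)) := by
    apply Continuous.tendsto
    fun_prop
  refine this.eventually (p := fun x => x < d) (eventually_lt_nhds ?_)
  simpa using hd

lemma bound_of_bigO (f : ℝ → ℝ) (n : ℕ) (h : f =O[𝓝 0] fun s : ℝ => s ^ n) :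
    ∃ M : ℝ, 0 ≤ M ∧ ∀ᶠ s in 𝓝 (0 : ℝ), |f s| ≤ M * |s| ^ n := by
  obtain ⟨M, hM, hb⟩ := h.exists_nonneg
  refine ⟨M, hM, ?_⟩
  filter_upwards [hb.bound] with s hs
  simpa using hs

lemma rem_bound (f P Q L p q M1 M2 M3 K l1 l2 s : ℝ) (hl1 : 0 ≤ l1) (hl2 : 0 ≤ l2)
    (hl : l1 + l2 ≤ K * |s| ^ 2)
    (h1 : |f - L| ≤ M1 * |s| ^ 3) (h2 : |P - p| ≤ M2 * |s| ^ 1) (h3 : |Q - q| ≤ M3 * |s| ^ 1)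
    (T : ℝ) (he : f - T = -l1 * P - l2 * Q) :
    |L - T + l1 * p + l2 * q| ≤ (M1 + K * M2 + K * M3) * |s| ^ 3 := by
  have e : L - T + l1 * p + l2 * q = -(f - L) - l1 * (P - p) - l2 * (Q - q) := by linarith
  have b1 : |l1 * (P - p)| ≤ (K * |s| ^ 2) * (M2 * |s| ^ 1) := by
    rw [abs_mul, abs_of_nonneg hl1]
    exact mul_le_mul (by linarith) h2 (abs_nonneg _) (by linarith)
  have b2 : |l2 * (Q - q)| ≤ (K * |s| ^ 2) * (M3 * |s| ^ 1) := by
    rw [abs_mul, abs_of_nonneg hl2]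
    exact mul_le_mul (by linarith) h3 (abs_nonneg _) (by linarith)
  rw [e]
  rw [abs_le] at *
  constructor <;> nlinarith

lemma comb_bound (x y z u v w : ℝ) (B n : ℝ) (h1 : |x| ≤ B) (h2 : |y| ≤ B) (h3 : |z| ≤ B)
    (hn : n = u * x + v * y + w * z) : |n| ≤ (|u| + |v| + |w|) * B := by
  rw [hn]
  calc |u * x + v * y + w * z| ≤ |u * x| + |v * y| + |w * z| := abs_add_three _ _ _
    _ = |u| * |x| + |v| * |y| + |w| * |z| := by simp [abs_mul]
    _ ≤ |u| * B + |v| * B + |w| * B := by gcongr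
    _ = _ := by ring

lemma asym (φ₁ φ₂ φ₃ P1 Q1 P2 Q2 : ℝ → ℝ) (α₁ α₂ β₁ β₂ β₃ a b p1 q1 p2 q2 : ℝ)
    (hα : (α₁, α₂) ≠ (0, 0))
    (hexp₁ : (fun s : ℝ => φ₁ s - α₁ * s - β₁ * s ^ 2) =O[𝓝 0] fun s : ℝ => s ^ 3)
    (hexp₂ : (fun s : ℝ => φ₂ s - α₂ * s - β₂ * s ^ 2) =O[𝓝 0] fun s : ℝ => s ^ 3)
    (hexp₃ : (fun s : ℝ => φ₃ s - β₃ * s ^ 2) =O[𝓝 0] fun s : ℝ => s ^ 3)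
    (hP1 : (fun s : ℝ => P1 s - p1) =O[𝓝 0] fun s : ℝ => s ^ 1)
    (hQ1 : (fun s : ℝ => Q1 s - q1) =O[𝓝 0] fun s : ℝ => s ^ 1)
    (hP2 : (fun s : ℝ => P2 s - p2) =O[𝓝 0] fun s : ℝ => s ^ 1)
    (hQ2 : (fun s : ℝ => Q2 s - q2) =O[𝓝 0] fun s : ℝ => s ^ 1)
    (hdet : b * (p1 - p2) - a * (q1 - q2) ≠ 0)
    (hcase : (∀ c : ℝ, c ≠ 0 → ¬(a = c * α₁ ∧ b = c * α₂)) ∨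
      ((∃ c : ℝ, c ≠ 0 ∧ a = c * α₁ ∧ b = c * α₂) ∧
        ∃ lam₁ lam₂ μ : ℝ,
          (β₁ = lam₁ * (-p1) + lam₂ * (-p2) + μ * a ∧
           β₂ = lam₁ * (-q1) + lam₂ * (-q2) + μ * b ∧
           β₃ = lam₁ + lam₂) ∧
          lam₁ * lam₂ < 0)) :
    ∀ᶠ s in 𝓝 (0 : ℝ), ∀ t l1 l2 : ℝ, 0 ≤ l1 → 0 ≤ l2 →
      φ₁ s - t * a = -l1 * P1 s - l2 * P2 s →
      φ₂ s - t * b = -l1 * Q1 s - l2 * Q2 s →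
      φ₃ s = l1 + l2 → s = 0 := by
  obtain ⟨M1, hM1, k1⟩ := bound_of_bigO _ _ hexp₁
  obtain ⟨M2, hM2, k2⟩ := bound_of_bigO _ _ hexp₂
  obtain ⟨M3, hM3, k3⟩ := bound_of_bigO _ _ hexp₃
  obtain ⟨M4, hM4, k4⟩ := bound_of_bigO _ _ hP1
  obtain ⟨M5, hM5, k5⟩ := bound_of_bigO _ _ hQ1
  obtain ⟨M6, hM6, k6⟩ := bound_of_bigO _ _ hP2
  obtain ⟨M7, hM7, k7⟩ := bound_of_bigO _ _ hQ2
  obtain ⟨K, hK⟩ : ∃ K, K = |β₃| + M3 := ⟨_, rfl⟩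
  have hK0 : 0 ≤ K := by rw [hK]; positivity
  obtain ⟨L, hL⟩ : ∃ L, L = (M1 + K * M4 + K * M6) + (M2 + K * M5 + K * M7) + M3 := ⟨_, rfl⟩
  have hLm1 : M1 + K * M4 + K * M6 ≤ L := by
    have : 0 ≤ (M2 + K * M5 + K * M7) + M3 := by positivity
    linarith
  have hLm2 : M2 + K * M5 + K * M7 ≤ L := by
    have : 0 ≤ (M1 + K * M4 + K * M6) + M3 := by positivity
    linarith
  have hLm3 : M3 ≤ L := by
    have : 0 ≤ (M1 + K * M4 + K * M6) + (M2 + K * M5 + K * M7) := by positivity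
    linarith
  have hL0 : 0 ≤ L := hM3.trans hLm3
  have k8 : ∀ᶠ s in 𝓝 (0 : ℝ), (1 : ℝ) * |s| < 1 := event_small 1 1 one_pos
  have main : ∀ᶠ s in 𝓝 (0 : ℝ), ∀ t l1 l2 : ℝ, 0 ≤ l1 → 0 ≤ l2 →
      φ₁ s - t * a = -l1 * P1 s - l2 * P2 s →
      φ₂ s - t * b = -l1 * Q1 s - l2 * Q2 s →
      φ₃ s = l1 + l2 → |s| < 1 ∧ l1 + l2 ≤ K * |s| ^ 2 ∧
        |α₁ * s + β₁ * s ^ 2 - t * a + l1 * p1 + l2 * p2| ≤ L * |s| ^ 3 ∧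
        |α₂ * s + β₂ * s ^ 2 - t * b + l1 * q1 + l2 * q2| ≤ L * |s| ^ 3 ∧
        |l1 + l2 - β₃ * s ^ 2| ≤ L * |s| ^ 3 := by
    filter_upwards [k1, k2, k3, k4, k5, k6, k7, k8] with s k1 k2 k3 k4 k5 k6 k7 k8
    intro t l1 l2 hl1 hl2 e1 e2 e3
    rw [one_mul] at k8
    rw [e3] at k3
    have hs3 : |s| ^ 3 ≤ |s| ^ 2 := pow_le_pow_of_le_one (abs_nonneg _) k8.le (by norm_num)
    have hl : l1 + l2 ≤ K * |s| ^ 2 := by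
      have g1 := (abs_le.mp k3).2
      have g2 : β₃ * s ^ 2 ≤ |β₃| * |s| ^ 2 := by
        rw [sq_abs]; gcongr; exact le_abs_self _
      have g3 : M3 * |s| ^ 3 ≤ M3 * |s| ^ 2 := by gcongr
      rw [hK]; linarith
    rw [sub_sub] at k1 k2
    refine ⟨k8, hl, ?_, ?_, ?_⟩
    · exact (rem_bound _ _ _ _ _ _ _ _ _ _ _ _ _ hl1 hl2 hl k1 k4 k6 _ e1).trans
        (by gcongr)
    · exact (rem_bound _ _ _ _ _ _ _ _ _ _ _ _ _ hl1 hl2 hl k2 k5 k7 _ e2).trans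
        (by gcongr)
    · exact k3.trans (by gcongr)
  rcases hcase with hc | ⟨⟨c, hc0, hca, hcb⟩, lam₁, lam₂, μ, ⟨hb1, hb2, hb3⟩, hlam⟩
  · have hD : b * α₁ - a * α₂ ≠ 0 := by
      intro h0
      by_cases h1 : α₁ = 0
      · have h2 : α₂ ≠ 0 := by
          intro h2; exact hα (by rw [h1, h2])
        have ha : a = 0 := by
          rw [h1, mul_zero, zero_sub, neg_eq_zero] at h0
          exact (mul_eq_zero.mp h0).resolve_right h2
        have hb : b ≠ 0 := by
          intro hb; rw [ha, hb] at hdet; simp at hdet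
        refine hc (b / α₂) (div_ne_zero hb h2) ⟨by rw [h1, ha, mul_zero], by field_simp⟩
      · have ha : a ≠ 0 := by
          intro ha
          rw [ha, zero_mul, sub_zero] at h0
          have hb := (mul_eq_zero.mp h0).resolve_right h1
          rw [ha, hb] at hdet; simp at hdet
        refine hc (a / α₁) (div_ne_zero ha h1) ⟨by field_simp, ?_⟩
        field_simp
        linarith
    obtain ⟨K2, hK2⟩ : ∃ K2, K2 = |b| * (L + |β₁| + K * |p1| + K * |p2|) +
      |a| * (L + |β₂| + K * |q1| + K * |q2|) := ⟨_, rfl⟩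
    filter_upwards [main, event_small _ K2 (abs_pos.mpr hD)] with s hs hsm
    intro t l1 l2 hl1 hl2 e1 e2 e3
    obtain ⟨s1, hl, r1, r2, -⟩ := hs t l1 l2 hl1 hl2 e1 e2 e3
    have hs3 : |s| ^ 3 ≤ |s| ^ 2 := pow_le_pow_of_le_one (abs_nonneg _) s1.le (by norm_num)
    refine small_is_zero _ K2 s 1 ?_ hsm
    have aux : ∀ α β T p q : ℝ, |α * s + β * s ^ 2 - T + l1 * p + l2 * q| ≤ L * |s| ^ 3 →
        |α * s - T| ≤ (L + |β| + K * |p| + K * |q|) * |s| ^ 2 := by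
      intro α β T p q h
      have g1 : |l1 * p| ≤ K * |s| ^ 2 * |p| := by
        rw [abs_mul, abs_of_nonneg hl1]; gcongr; linarith
      have g2 : |l2 * q| ≤ K * |s| ^ 2 * |q| := by
        rw [abs_mul, abs_of_nonneg hl2]; gcongr; linarith
      have g3 : |β * s ^ 2| = |β| * |s| ^ 2 := by rw [abs_mul, abs_pow]
      have g4 : L * |s| ^ 3 ≤ L * |s| ^ 2 := by gcongr
      have g3' := g3.le
      rw [abs_le] at h g1 g2 g3' ⊢
      constructor <;> linarith [h.1, h.2, g1.1, g1.2, g2.1, g2.2, g3'.1, g3'.2]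
    have w1 := aux _ _ _ _ _ r1
    have w2 := aux _ _ _ _ _ r2
    calc |b * α₁ - a * α₂| * |s| ^ 1 = |b * (α₁ * s - t * a) - a * (α₂ * s - t * b)| := by
          rw [pow_one, ← abs_mul]; congr 1; ring
      _ ≤ |b * (α₁ * s - t * a)| + |a * (α₂ * s - t * b)| := abs_sub _ _
      _ = |b| * |α₁ * s - t * a| + |a| * |α₂ * s - t * b| := by rw [abs_mul, abs_mul]
      _ ≤ |b| * ((L + |β₁| + K * |p1| + K * |p2|) * |s| ^ 2) +
          |a| * ((L + |β₂| + K * |q1| + K * |q2|) * |s| ^ 2) := by gcongr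
      _ = K2 * |s| ^ (1 + 1) := by rw [hK2]; ring
  · obtain ⟨Δ, hΔ⟩ : ∃ Δ, Δ = b * (p1 - p2) - a * (q1 - q2) := ⟨_, rfl⟩
    rw [← hΔ] at hdet
    have hΔ0 : 0 < |Δ| := abs_pos.mpr hdet
    have hne1 : lam₁ ≠ 0 := by rintro rfl; simp at hlam
    have hne2 : lam₂ ≠ 0 := by rintro rfl; simp at hlam
    obtain ⟨K1, hK1⟩ : ∃ K1, K1 = (|b| + |(-a)| + |(-(b * p2 - a * q2))|) * L := ⟨_, rfl⟩
    obtain ⟨K2, hK2⟩ : ∃ K2, K2 = (|b| + |(-a)| + |(-(b * p1 - a * q1))|) * L := ⟨_, rfl⟩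
    have z1 : 0 < |lam₁| * |Δ| := mul_pos (abs_pos.mpr hne1) hΔ0
    have z2 : 0 < |lam₂| * |Δ| := mul_pos (abs_pos.mpr hne2) hΔ0
    filter_upwards [main, event_small _ K1 z1, event_small _ K2 z2] with s hs hs1 hs2
    intro t l1 l2 hl1 hl2 e1 e2 e3
    obtain ⟨s1, hl, r1, r2, r3⟩ := hs t l1 l2 hl1 hl2 e1 e2 e3
    have D1 : |(l1 - lam₁ * s ^ 2) * Δ| ≤ K1 * |s| ^ 3 := by
      refine (comb_bound _ _ _ b (-a) (-(b * p2 - a * q2)) _ _ r1 r2 r3 ?_).trans_eq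
        (by rw [hK1]; ring)
      rw [hΔ, hb1, hb2, hb3, hca, hcb]; ring
    have D2 : |(l2 - lam₂ * s ^ 2) * (-Δ)| ≤ K2 * |s| ^ 3 := by
      refine (comb_bound _ _ _ b (-a) (-(b * p1 - a * q1)) _ _ r1 r2 r3 ?_).trans_eq
        (by rw [hK2]; ring)
      rw [hΔ, hb1, hb2, hb3, hca, hcb]; ring
    rw [abs_mul] at D1 D2
    rw [abs_neg] at D2
    have fin : ∀ l lam : ℝ, 0 ≤ l → lam < 0 → |lam| * |s| ^ 2 ≤ |l - lam * s ^ 2| := by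
      intro l lam h0 h1
      rw [abs_of_neg h1, sq_abs]
      refine le_trans ?_ (le_abs_self _)
      linarith
    rcases lt_or_gt_of_ne hne1 with hneg | hpos
    · refine small_is_zero _ K1 s 2 ?_ hs1
      calc |lam₁| * |Δ| * |s| ^ 2 = (|lam₁| * |s| ^ 2) * |Δ| := by ring
        _ ≤ |l1 - lam₁ * s ^ 2| * |Δ| := by gcongr; exact fin _ _ hl1 hneg
        _ ≤ _ := D1
    · have hneg : lam₂ < 0 := by
        by_contra h
        push Not at h
        have := mul_nonneg hpos.le h
        linarith
      refine small_is_zero _ K2 s 2 ?_ hs2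
      calc |lam₂| * |Δ| * |s| ^ 2 = (|lam₂| * |s| ^ 2) * |Δ| := by ring
        _ ≤ |l2 - lam₂ * s ^ 2| * |Δ| := by gcongr; exact fin _ _ hl2 hneg
        _ ≤ _ := D2

lemma deriv_of_bigO (φ : ℝ → ℝ) (α β : ℝ)
    (h : (fun s : ℝ => φ s - α * s - β * s ^ 2) =O[𝓝 0] fun s : ℝ => s ^ 3) :
    φ 0 = 0 ∧ HasDerivAt φ α 0 := by
  have h0 : φ 0 = 0 := by
    obtain ⟨M, -, hM⟩ := bound_of_bigO _ _ h
    have := hM.self_of_nhds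
    simpa using this
  refine ⟨h0, ?_⟩
  have h2 : (fun s : ℝ => φ s - α * s - β * s ^ 2) =o[𝓝 0] fun s : ℝ => s := by
    refine h.trans_isLittleO ?_
    simpa using Asymptotics.isLittleO_pow_pow (𝕜 := ℝ) (show 1 < 3 by norm_num)
  have h3 : (fun s : ℝ => β * s ^ 2) =o[𝓝 0] fun s : ℝ => s := by
    refine Asymptotics.IsLittleO.const_mul_left ?_ β
    simpa using Asymptotics.isLittleO_pow_pow (𝕜 := ℝ) (show 1 < 2 by norm_num)
  rw [hasDerivAt_iff_isLittleO_nhds_zero]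
  refine (h2.add h3).congr_left ?_
  intro s
  simp [h0]
  ring

lemma local_param (h : MvPolynomial (Fin 2) ℝ) (φ₁ φ₂ : ℝ → ℝ) (α₁ α₂ : ℝ)
    (hα : (α₁, α₂) ≠ (0, 0)) (hφa₁ : AnalyticAt ℝ φ₁ 0) (hφa₂ : AnalyticAt ℝ φ₂ 0)
    (h1 : φ₁ 0 = 0) (h2 : φ₂ 0 = 0) (hd1 : HasDerivAt φ₁ α₁ 0) (hd2 : HasDerivAt φ₂ α₂ 0)
    (hz : ∀ᶠ s in 𝓝 (0 : ℝ), MvPolynomial.eval ![φ₁ s, φ₂ s] h = 0)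
    (hg : MvPolynomial.eval (0 : Fin 2 → ℝ) (MvPolynomial.pderiv 0 h) ≠ 0 ∨
      MvPolynomial.eval (0 : Fin 2 → ℝ) (MvPolynomial.pderiv 1 h) ≠ 0)
    (S : ℝ → Prop) (hS : ∀ᶠ s in 𝓝 (0 : ℝ), S s) :
    ∀ᶠ v in 𝓝 (0 : Fin 2 → ℝ), MvPolynomial.eval v h = 0 →
      ∃ s, S s ∧ v = ![φ₁ s, φ₂ s] := by
  have v0 : ![φ₁ 0, φ₂ 0] = (0 : Fin 2 → ℝ) := by
    rw [h1, h2]; ext i; fin_cases i <;> rfl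
  have hN : 0 < α₁ ^ 2 + α₂ ^ 2 := by
    by_contra hcon
    apply hα
    have a1 : α₁ = 0 := by nlinarith [sq_nonneg α₁, sq_nonneg α₂]
    have a2 : α₂ = 0 := by nlinarith [sq_nonneg α₁, sq_nonneg α₂]
    rw [a1, a2]
  obtain ⟨gx, hgx⟩ : ∃ g, g = MvPolynomial.eval (0 : Fin 2 → ℝ) (MvPolynomial.pderiv 0 h) :=
    ⟨_, rfl⟩
  obtain ⟨gy, hgy⟩ : ∃ g, g = MvPolynomial.eval (0 : Fin 2 → ℝ) (MvPolynomial.pderiv 1 h) :=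
    ⟨_, rfl⟩
  have horth : gx * α₁ + gy * α₂ = 0 := by
    have hc := curve_deriv h _ _ _ _ _ hd1 hd2
    rw [v0, ← hgx, ← hgy] at hc
    have hc0 : HasDerivAt (fun s => MvPolynomial.eval ![φ₁ s, φ₂ s] h) 0 0 :=
      (hasDerivAt_const (0 : ℝ) (0 : ℝ)).congr_of_eventuallyEq hz
    exact hc.unique hc0
  obtain ⟨G, hG⟩ : ∃ G, G = gy * α₁ - gx * α₂ := ⟨_, rfl⟩
  have hG0 : G ≠ 0 := by
    intro h0
    have e : (gx ^ 2 + gy ^ 2) * (α₁ ^ 2 + α₂ ^ 2) = 0 := by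
      have : (gx ^ 2 + gy ^ 2) * (α₁ ^ 2 + α₂ ^ 2) =
        (gx * α₁ + gy * α₂) ^ 2 + (gy * α₁ - gx * α₂) ^ 2 := by ring
      rw [this, horth, ← hG, h0]; ring
    have e2 := (mul_eq_zero.mp e).resolve_right hN.ne'
    rw [← hgx, ← hgy] at hg
    rcases hg with hg | hg
    · exact hg (by nlinarith [sq_nonneg gx, sq_nonneg gy])
    · exact hg (by nlinarith [sq_nonneg gx, sq_nonneg gy])
  obtain ⟨c, hc⟩ : ∃ c, c = |G| / (2 * (|α₁| + |α₂| + 1)) := ⟨_, rfl⟩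
  have hden : 0 < 2 * (|α₁| + |α₂| + 1) := by positivity
  have hc0 : 0 < c := by rw [hc]; exact div_pos (abs_pos.mpr hG0) hden
  have hlo := (strict_eval h 0).isLittleO.bound hc0
  rw [nhds_prod_eq, eventually_prod_iff] at hlo
  obtain ⟨pa, hpa, pb, hpb, hab⟩ := hlo
  have hψ : HasStrictDerivAt (fun s => α₁ * φ₁ s + α₂ * φ₂ s) (α₁ * α₁ + α₂ * α₂) 0 := by
    have a1 := hφa₁.hasStrictDerivAt
    have a2 := hφa₂.hasStrictDerivAt
    rw [hd1.deriv] at a1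
    rw [hd2.deriv] at a2
    exact (a1.const_mul α₁).fun_add (a2.const_mul α₂)
  have hmap := hψ.map_nhds_eq (by nlinarith)
  have hcv : Tendsto (fun s => ![φ₁ s, φ₂ s]) (𝓝 0) (𝓝 (0 : Fin 2 → ℝ)) := by
    rw [← v0, tendsto_pi_nhds]
    intro i
    fin_cases i
    · simpa using hd1.continuousAt.tendsto
    · simpa using hd2.continuousAt.tendsto
  have hS' : {s | S s ∧ pb ![φ₁ s, φ₂ s] ∧ MvPolynomial.eval ![φ₁ s, φ₂ s] h = 0} ∈
      𝓝 (0 : ℝ) := hS.and ((hcv.eventually hpb).and hz)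
  have him := image_mem_map (m := fun s => α₁ * φ₁ s + α₂ * φ₂ s) hS'
  rw [hmap, h1, h2] at him
  simp only [mul_zero, add_zero] at him
  have hlin : Tendsto (fun v : Fin 2 → ℝ => α₁ * v 0 + α₂ * v 1) (𝓝 0) (𝓝 0) := by
    have : Continuous (fun v : Fin 2 → ℝ => α₁ * v 0 + α₂ * v 1) := by fun_prop
    simpa using this.tendsto 0
  filter_upwards [hpa, hlin him] with v hv1 hv2 hv0
  obtain ⟨s, ⟨hs1, hs2, hs3⟩, hs4⟩ := hv2
  refine ⟨s, hs1, ?_⟩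
  have hb := hab hv1 hs2
  simp only at hb hs4
  rw [hv0, hs3] at hb
  obtain ⟨d0, hd0⟩ : ∃ d, d = v 0 - φ₁ s := ⟨_, rfl⟩
  obtain ⟨d1, hd1'⟩ : ∃ d, d = v 1 - φ₂ s := ⟨_, rfl⟩
  have hperp : α₁ * d0 + α₂ * d1 = 0 := by rw [hd0, hd1']; linarith
  obtain ⟨k, hk⟩ : ∃ k, k = (α₁ * d1 - α₂ * d0) / (α₁ ^ 2 + α₂ ^ 2) := ⟨_, rfl⟩
  have hk0 : d0 = -k * α₂ := by
    rw [hk]; field_simp; linear_combination α₁ * hperp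
  have hk1 : d1 = k * α₁ := by
    rw [hk]; field_simp; linear_combination α₂ * hperp
  have hb' : |k| * |G| ≤ c * ‖v - ![φ₁ s, φ₂ s]‖ := by
    refine le_trans (le_of_eq ?_) hb
    rw [← abs_mul, Real.norm_eq_abs, ← abs_neg]
    congr 1
    have hsum : (∑ i, MvPolynomial.eval (0 : Fin 2 → ℝ) (MvPolynomial.pderiv i h) •
        (ContinuousLinearMap.proj i : (Fin 2 → ℝ) →L[ℝ] ℝ)) (v - ![φ₁ s, φ₂ s]) =
        gx * d0 + gy * d1 := by
      rw [Fin.sum_univ_two, ← hgx, ← hgy, hd0, hd1']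
      rfl
    rw [hsum, hk0, hk1, hG]; ring
  have hnorm : ‖v - ![φ₁ s, φ₂ s]‖ ≤ |k| * (|α₁| + |α₂| + 1) := by
    rw [pi_norm_le_iff_of_nonneg (by positivity)]
    intro i
    fin_cases i
    · simp only [Pi.sub_apply, Real.norm_eq_abs]
      have : |d0| ≤ |k| * (|α₁| + |α₂| + 1) := by
        rw [hk0, abs_mul, abs_neg]; gcongr; linarith [abs_nonneg α₁]
      simpa [hd0] using this
    · simp only [Pi.sub_apply, Real.norm_eq_abs]
      have : |d1| ≤ |k| * (|α₁| + |α₂| + 1) := by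
        rw [hk1, abs_mul]; gcongr; linarith [abs_nonneg α₂]
      simpa [hd1'] using this
  have hfin : |k| * |G| ≤ |k| * |G| / 2 := by
    calc |k| * |G| ≤ c * (|k| * (|α₁| + |α₂| + 1)) := hb'.trans (by gcongr)
      _ = |k| * |G| / 2 := by rw [hc]; field_simp
  have hkz : k = 0 := by
    by_contra hne
    have : 0 < |k| * |G| := mul_pos (abs_pos.mpr hne) (abs_pos.mpr hG0)
    linarith
  rw [hkz] at hk0 hk1
  ext i
  fin_cases i
  · simp; linarith
  · simp; linarith

theorem stmt11 (f₁ f₂ : MvPolynomial (Fin 2) ℝ)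
    (hconv₁ : ConvexOn ℝ Set.univ (fun v : Fin 2 → ℝ => MvPolynomial.eval v f₁))
    (hconv₂ : ConvexOn ℝ Set.univ (fun v : Fin 2 → ℝ => MvPolynomial.eval v f₂))
    (h₁0 : MvPolynomial.eval (0 : Fin 2 → ℝ) f₁ = 0)
    (h₂0 : MvPolynomial.eval (0 : Fin 2 → ℝ) f₂ = 0)
    (A : Set (EuclideanSpace ℝ (Fin 3)))
    (hA : A = {p | MvPolynomial.eval ![p 0, p 1] f₁ ≤ p 2 ∧
                   MvPolynomial.eval ![p 0, p 1] f₂ ≤ p 2})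
    (C : Set (EuclideanSpace ℝ (Fin 3)))
    (hC : C = {p | p 2 = MvPolynomial.eval ![p 0, p 1] f₁ ∧
                   p 2 = MvPolynomial.eval ![p 0, p 1] f₂})
    (φ₁ φ₂ φ₃ : ℝ → ℝ)
    (hφa₁ : AnalyticAt ℝ φ₁ 0) (hφa₂ : AnalyticAt ℝ φ₂ 0) (hφa₃ : AnalyticAt ℝ φ₃ 0)
    (α₁ α₂ β₁ β₂ β₃ : ℝ) (hα : (α₁, α₂) ≠ (0, 0))
    (hexp₁ : (fun s : ℝ => φ₁ s - α₁ * s - β₁ * s ^ 2) =O[nhds 0] fun s : ℝ => s ^ 3)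
    (hexp₂ : (fun s : ℝ => φ₂ s - α₂ * s - β₂ * s ^ 2) =O[nhds 0] fun s : ℝ => s ^ 3)
    (hexp₃ : (fun s : ℝ => φ₃ s - β₃ * s ^ 2) =O[nhds 0] fun s : ℝ => s ^ 3)
    (hφC : ∀ᶠ s in nhds (0 : ℝ), e3 (φ₁ s) (φ₂ s) (φ₃ s) ∈ C)
    (a b : ℝ) (B : Set (EuclideanSpace ℝ (Fin 3)))
    (hB : B = Set.range (fun t : ℝ => t • e3 a b 0))
    (hLI : LinearIndependent ℝ
      ![(![a, b, 0] : Fin 3 → ℝ),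
        ![-MvPolynomial.eval (0 : Fin 2 → ℝ) (MvPolynomial.pderiv 0 f₁),
          -MvPolynomial.eval (0 : Fin 2 → ℝ) (MvPolynomial.pderiv 1 f₁), 1],
        ![-MvPolynomial.eval (0 : Fin 2 → ℝ) (MvPolynomial.pderiv 0 f₂),
          -MvPolynomial.eval (0 : Fin 2 → ℝ) (MvPolynomial.pderiv 1 f₂), 1]])
    (hcover : ∃ U ∈ nhds (0 : EuclideanSpace ℝ (Fin 3)),
      C ∩ U ⊆ Set.range (fun s : ℝ => e3 (φ₁ s) (φ₂ s) (φ₃ s)))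
    (hcase : (∀ c : ℝ, c ≠ 0 → ¬(a = c * α₁ ∧ b = c * α₂)) ∨
      ((∃ c : ℝ, c ≠ 0 ∧ a = c * α₁ ∧ b = c * α₂) ∧
        ∃ lam₁ lam₂ μ : ℝ,
          (β₁ = lam₁ * (-MvPolynomial.eval (0 : Fin 2 → ℝ) (MvPolynomial.pderiv 0 f₁)) +
                lam₂ * (-MvPolynomial.eval (0 : Fin 2 → ℝ) (MvPolynomial.pderiv 0 f₂)) + μ * a ∧
           β₂ = lam₁ * (-MvPolynomial.eval (0 : Fin 2 → ℝ) (MvPolynomial.pderiv 1 f₁)) +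
                lam₂ * (-MvPolynomial.eval (0 : Fin 2 → ℝ) (MvPolynomial.pderiv 1 f₂)) + μ * b ∧
           β₃ = lam₁ + lam₂) ∧
          lam₁ * lam₂ < 0)) :
    ∃ ε : ℝ, 0 < ε ∧ ∀ p ∈ B, 0 < ‖p‖ → ‖p‖ < ε → ∀ w, IsMetricProj A p w → w ∉ C := by
  have hd1 := deriv_of_bigO φ₁ α₁ β₁ hexp₁
  have hd2 := deriv_of_bigO φ₂ α₂ β₂ hexp₂
  have v0 : ![φ₁ 0, φ₂ 0] = (0 : Fin 2 → ℝ) := by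
    rw [hd1.1, hd2.1]; ext i; fin_cases i <;> rfl
  have hO : ∀ g : MvPolynomial (Fin 2) ℝ,
      (fun s : ℝ => MvPolynomial.eval ![φ₁ s, φ₂ s] g - MvPolynomial.eval (0 : Fin 2 → ℝ) g)
        =O[𝓝 0] fun s : ℝ => s ^ 1 := by
    intro g
    have := (curve_deriv g _ _ _ _ _ hd1.2 hd2.2).isBigO_sub
    rw [v0] at this
    simpa using this
  have hdet : b * (MvPolynomial.eval (0 : Fin 2 → ℝ) (MvPolynomial.pderiv 0 f₁) -
        MvPolynomial.eval (0 : Fin 2 → ℝ) (MvPolynomial.pderiv 0 f₂)) -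
      a * (MvPolynomial.eval (0 : Fin 2 → ℝ) (MvPolynomial.pderiv 1 f₁) -
        MvPolynomial.eval (0 : Fin 2 → ℝ) (MvPolynomial.pderiv 1 f₂)) ≠ 0 := by
    have hu := (Matrix.linearIndependent_rows_iff_isUnit (A := Matrix.of
      ![(![a, b, 0] : Fin 3 → ℝ),
        ![-MvPolynomial.eval (0 : Fin 2 → ℝ) (MvPolynomial.pderiv 0 f₁),
          -MvPolynomial.eval (0 : Fin 2 → ℝ) (MvPolynomial.pderiv 1 f₁), 1],
        ![-MvPolynomial.eval (0 : Fin 2 → ℝ) (MvPolynomial.pderiv 0 f₂),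
          -MvPolynomial.eval (0 : Fin 2 → ℝ) (MvPolynomial.pderiv 1 f₂), 1]])).mp hLI
    rw [Matrix.isUnit_iff_isUnit_det, Matrix.det_fin_three, isUnit_iff_ne_zero] at hu
    intro h0
    apply hu
    simp [-MvPolynomial.eval_zero]
    linarith
  have hgne : MvPolynomial.eval (0 : Fin 2 → ℝ) (MvPolynomial.pderiv 0 (f₁ - f₂)) ≠ 0 ∨
      MvPolynomial.eval (0 : Fin 2 → ℝ) (MvPolynomial.pderiv 1 (f₁ - f₂)) ≠ 0 := by
    by_contra hcon
    push Not at hcon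
    simp only [map_sub] at hcon
    rw [hcon.1, hcon.2] at hdet
    simp at hdet
  have hz : ∀ᶠ s in 𝓝 (0 : ℝ), MvPolynomial.eval ![φ₁ s, φ₂ s] (f₁ - f₂) = 0 := by
    filter_upwards [hφC] with s hs
    rw [hC] at hs
    simp [e3] at hs
    rw [map_sub, ← hs.1, ← hs.2, sub_self]
  have hasy := asym φ₁ φ₂ φ₃ _ _ _ _ α₁ α₂ β₁ β₂ β₃ a b _ _ _ _ hα hexp₁ hexp₂ hexp₃
    (hO (MvPolynomial.pderiv 0 f₁)) (hO (MvPolynomial.pderiv 1 f₁))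
    (hO (MvPolynomial.pderiv 0 f₂)) (hO (MvPolynomial.pderiv 1 f₂)) hdet hcase
  have hpar := local_param (f₁ - f₂) φ₁ φ₂ α₁ α₂ hα hφa₁ hφa₂ hd1.1 hd2.1 hd1.2 hd2.2 hz hgne
    _ (hasy.and hφC)
  have hgrad : ∀ᶠ v in 𝓝 (0 : Fin 2 → ℝ),
      MvPolynomial.eval v (MvPolynomial.pderiv 0 (f₁ - f₂)) ≠ 0 ∨
      MvPolynomial.eval v (MvPolynomial.pderiv 1 (f₁ - f₂)) ≠ 0 := by
    rcases hgne with h | h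
    · filter_upwards [(strict_eval _ 0).continuousAt.eventually_ne h] with v hv
      exact Or.inl hv
    · filter_upwards [(strict_eval _ 0).continuousAt.eventually_ne h] with v hv
      exact Or.inr hv
  have hpr : Tendsto (fun w : EuclideanSpace ℝ (Fin 3) => ![w 0, w 1]) (𝓝 0)
      (𝓝 (0 : Fin 2 → ℝ)) := by
    rw [tendsto_pi_nhds]
    intro i
    fin_cases i
    · have : Continuous (fun w : EuclideanSpace ℝ (Fin 3) => w 0) := by fun_prop
      simpa using this.tendsto 0
    · have : Continuous (fun w : EuclideanSpace ℝ (Fin 3) => w 1) := by fun_prop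
      simpa using this.tendsto 0
  obtain ⟨ε, hε, hball⟩ := Metric.eventually_nhds_iff.mp (hpr.eventually (hpar.and hgrad))
  refine ⟨ε / 2, by positivity, ?_⟩
  intro p hp hp0 hpε w hw hwC
  obtain ⟨hwA, hmin⟩ := hw
  rw [hA] at hmin
  have h0 := hmin 0 (by
    have : (![0, 0] : Fin 2 → ℝ) = 0 := by ext i; fin_cases i <;> rfl
    simp [-MvPolynomial.eval_zero, this, h₁0, h₂0])
  have hwn : dist w 0 < ε := by
    rw [dist_zero_right]
    have : ‖w‖ ≤ ‖w - p‖ + ‖p‖ := by simpa using norm_add_le (w - p) p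
    rw [zero_sub, norm_neg] at h0
    linarith
  obtain ⟨g1, g2⟩ := hball hwn
  rw [hC] at hwC
  obtain ⟨c1, c2⟩ := hwC
  obtain ⟨s, ⟨hs, hsC⟩, hv⟩ := g1 (by rw [map_sub, ← c1, ← c2, sub_self])
  have w0 : w 0 = φ₁ s := by simpa using congrFun hv 0
  have w1 : w 1 = φ₂ s := by simpa using congrFun hv 1
  have w2 : w 2 = φ₃ s := by
    rw [hC] at hsC
    simp [e3] at hsC
    rw [c1, hv, hsC.1]
  obtain ⟨l1, l2, hl1, hl2, r1, r2, r3⟩ := kkt f₁ f₂ w p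
    (fun q hq1 hq2 => hmin q ⟨hq1, hq2⟩) c1 c2 (by
      simp only [map_sub, sub_ne_zero] at g2
      exact g2)
  rw [hB] at hp
  obtain ⟨t, rfl⟩ := hp
  simp [e3] at r1 r2 r3
  rw [hv] at r1 r2
  rw [w0] at r1
  rw [w1] at r2
  rw [w2] at r3
  have hs0 := hs t l1 l2 hl1 hl2 (by linarith) (by linarith) r3
  have hφ30 : φ₃ 0 = 0 := by
    obtain ⟨M, -, hM⟩ := bound_of_bigO _ _ hexp₃
    have := hM.self_of_nhds
    simpa using this
  rw [hs0, hφ30] at r3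
  have z1 : l1 = 0 := by linarith
  have z2 : l2 = 0 := by linarith
  rw [hs0, hd1.1, z1, z2] at r1
  rw [hs0, hd2.1, z1, z2] at r2
  apply hp0.ne'
  rw [norm_eq_zero]
  ext i
  fin_cases i
  · simp [e3]; simpa using r1
  · simp [e3]; simpa using r2
  · simp [e3]
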